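/- The Shrikhande graph contains no induced subgraph isomorphic to the complement of the 6-cycle; that is, there is no injective map f from Fin 6 to its vertex set such that f(i) and f(j) are adjacent if and only if i ≠ j and i and j are not consecutive modulo 6. -/

import Mathlib

/-!
The complement of the 6-cycle is the triangular prism: triangles `0, 2, 4` and `1, 3, 5` joined by
the matching `0 – 3`, `2 – 5`, `4 – 1`. The Shrikhande graph is the Cayley graph of `(ZMod 4)²`
with connection set `S = {±(0,1), ±(1,0), ±(1,1)}`, so by translation the image of `0` may be taken
to be the origin. What remains is a small search (`no_prism_at_origin`): there are 12 choices for
the ordered triangle `0, 2, 4`; once it is fixed only 2 neighbours of the origin are non-adjacent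
to the other two triangle vertices, and no choice extends to the second triangle.
-/

/-- The Shrikhande graph on `(ZMod 4) × (ZMod 4)`: distinct vertices `(a,b)` and `(c,d)` are
adjacent iff `(a-c, b-d) ∈ {(0,1),(0,3),(1,0),(3,0),(1,1),(3,3)}` (arithmetic mod 4; this
difference set is closed under negation, so the symmetrization `fromRel` does not change it). -/
def shrikhande : SimpleGraph (ZMod 4 × ZMod 4) :=
  SimpleGraph.fromRel (fun u v =>
    (u.1 - v.1, u.2 - v.2) ∈
      ({(0, 1), (0, 3), (1, 0), (3, 0), (1, 1), (3, 3)} : Finset (ZMod 4 × ZMod 4)))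

/-- The connection set of the Shrikhande graph as a Cayley graph of `(ZMod 4)²`. -/
abbrev shrikhandeDiffs : Finset (ZMod 4 × ZMod 4) :=
  {(0, 1), (0, 3), (1, 0), (3, 0), (1, 1), (3, 3)}

theorem shrikhande_adj_iff (u v : ZMod 4 × ZMod 4) :
    shrikhande.Adj u v ↔ u - v ∈ shrikhandeDiffs := by
  have neg_mem : ∀ x : ZMod 4 × ZMod 4, x ∈ shrikhandeDiffs → -x ∈ shrikhandeDiffs := by decide
  have zero_notMem : (0 : ZMod 4 × ZMod 4) ∉ shrikhandeDiffs := by decide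
  unfold shrikhande
  rw [SimpleGraph.fromRel_adj]
  change u ≠ v ∧ (u - v ∈ shrikhandeDiffs ∨ v - u ∈ shrikhandeDiffs) ↔ _
  constructor
  · rintro ⟨-, h | h⟩
    · exact h
    · simpa only [neg_sub] using neg_mem _ h
  · refine fun h => ⟨?_, Or.inl h⟩
    rintro rfl
    exact zero_notMem (by simpa only [sub_self] using h)

set_option maxRecDepth 100000 in
set_option synthInstance.maxHeartbeats 400000 in
set_option synthInstance.maxSize 2000 in
/-- There is no induced prism with triangles `0, b, c` and `d, e, g` and matching edges
`0 – d`, `b – e`, `c – g`. The hypotheses are interleaved with the quantifiers so that the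
decision procedure prunes early. -/
theorem no_prism_at_origin :
    ∀ b : ZMod 4 × ZMod 4, b ∈ shrikhandeDiffs →
    ∀ c : ZMod 4 × ZMod 4, c ∈ shrikhandeDiffs → c - b ∈ shrikhandeDiffs →
    ∀ d : ZMod 4 × ZMod 4, d ∈ shrikhandeDiffs → d - b ∉ shrikhandeDiffs →
      d - c ∉ shrikhandeDiffs →
    ∀ e : ZMod 4 × ZMod 4, e - b ∈ shrikhandeDiffs → e - d ∈ shrikhandeDiffs →
      e ∉ shrikhandeDiffs → e - c ∉ shrikhandeDiffs → e ≠ 0 →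
    ∀ g : ZMod 4 × ZMod 4, g - c ∈ shrikhandeDiffs → g - d ∈ shrikhandeDiffs →
      g - e ∈ shrikhandeDiffs → g ∉ shrikhandeDiffs → g - b ∉ shrikhandeDiffs → g ≠ 0 →
      False := by
  decide +kernel

/-- The Shrikhande graph has no induced subgraph isomorphic to the complement of the 6-cycle. -/
theorem shrikhande_no_induced_complement_C6 :
    ¬ ∃ f : Fin 6 → ZMod 4 × ZMod 4, Function.Injective f ∧
      ∀ i j : Fin 6, shrikhande.Adj (f i) (f j) ↔
        (i ≠ j ∧ ¬ ((i.val + 1) % 6 = j.val ∨ (j.val + 1) % 6 = i.val)) := by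
  rintro ⟨f, hinj, hf⟩
  have key : ∀ i j : Fin 6, (f i - f 0) - (f j - f 0) ∈ shrikhandeDiffs ↔
      (i ≠ j ∧ ¬ ((i.val + 1) % 6 = j.val ∨ (j.val + 1) % 6 = i.val)) := fun i j => by
    rw [sub_sub_sub_cancel_right, ← shrikhande_adj_iff, hf]
  have key0 : ∀ i : Fin 6, f i - f 0 ∈ shrikhandeDiffs ↔
      (i ≠ 0 ∧ ¬ ((i.val + 1) % 6 = (0 : Fin 6).val ∨ ((0 : Fin 6).val + 1) % 6 = i.val)) :=
    fun i => by rw [← shrikhande_adj_iff, hf]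
  have ne0 : ∀ i : Fin 6, i ≠ 0 → f i - f 0 ≠ 0 := fun i hi =>
    sub_ne_zero.mpr (hinj.ne hi)
  exact no_prism_at_origin
    (f 2 - f 0) ((key0 2).2 (by decide))
    (f 4 - f 0) ((key0 4).2 (by decide)) ((key 4 2).2 (by decide))
    (f 3 - f 0) ((key0 3).2 (by decide)) (mt (key 3 2).1 (by decide)) (mt (key 3 4).1 (by decide))
    (f 5 - f 0) ((key 5 2).2 (by decide)) ((key 5 3).2 (by decide)) (mt (key0 5).1 (by decide))
    (mt (key 5 4).1 (by decide)) (ne0 5 (by decide))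
    (f 1 - f 0) ((key 1 4).2 (by decide)) ((key 1 3).2 (by decide)) ((key 1 5).2 (by decide))
    (mt (key0 1).1 (by decide)) (mt (key 1 2).1 (by decide)) (ne0 1 (by decide))
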